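/- For each N and n there exists f(n, N) ∈ ℕ such that: whenever 𝔸 is a relational structure admitting a chain of n Hagemann–Mitschke terms as polymorphisms and I is an unsatisfiable path instance of CSP(𝔸) such that |B_i| ≤ N for all i, then 𝒫_𝔸^{f(n,N)}(I) ⊢ G. -/

import Mathlib

namespace CSPPaper

/-- A relational structure on `A`: a family of finitary relations (the basic
relations), a relation of arity `n` being a set of `n`-tuples `Fin n → A`. -/
structure RelStruct (A : Type) where
  basic : Set (Σ n : ℕ, Set (Fin n → A))

/-- A CSP instance with variables `V` over domain `A`: a set of constraints,
each consisting of a scope (a tuple of variables) and a constraint relation. -/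
structure Instance (A : Type) (V : Type) where
  constraints : Set (Σ n : ℕ, (Fin n → V) × Set (Fin n → A))

/-- `f : V → A` is a solution of the instance `I`. -/
def Instance.Sol {A V : Type} (I : Instance A V) (f : V → A) : Prop :=
  ∀ c ∈ I.constraints, (fun i => f (c.2.1 i)) ∈ c.2.2

def Instance.Satisfiable {A V : Type} (I : Instance A V) : Prop :=
  ∃ f, I.Sol f

/-- `I` is an instance of `CSP(𝔸)`: all its constraint relations are basic
relations of `𝔸`. -/
def IsCSPInstance {A V : Type} (𝔸 : RelStruct A) (I : Instance A V) : Prop :=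
  ∀ c ∈ I.constraints, (⟨c.1, c.2.2⟩ : Σ n : ℕ, Set (Fin n → A)) ∈ 𝔸.basic

/-- An atom of a Datalog rule over the variable set `Fin r`: a predicate
(a relation on `A`) applied to a tuple of variables. -/
structure Atom (A : Type) (r : ℕ) where
  arity : ℕ
  scope : Fin arity → Fin r
  rel : Set (Fin arity → A)

def Atom.holds {A : Type} {r : ℕ} (a : Atom A r) (f : Fin r → A) : Prop :=
  (fun i => f (a.scope i)) ∈ a.rel

/-- A rule of the `r`-ary maximal symmetric Datalog program `𝒫_𝔸^r` consistent
with `𝔸`: a linear Datalog rule on at most `r` variables, whose head is an IDB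
(an arbitrary relation on `A` of arity at most `r`), whose body contains at most
one IDB atom (`idb`) and otherwise non-IDB atoms for basic relations of `𝔸`
of arity at most `r` (`edb`, without repetition), such that the rule is
consistent with `𝔸`, and, if the body contains an IDB atom, its mirror image is
also consistent with `𝔸`. -/
structure Rule (A : Type) (𝔸 : RelStruct A) (r : ℕ) where
  head : Atom A r
  idb : Option (Atom A r)
  edb : List (Atom A r)
  head_arity : head.arity ≤ r
  idb_arity : ∀ a ∈ idb, a.arity ≤ r
  edb_arity : ∀ a ∈ edb, a.arity ≤ r
  edb_basic : ∀ a ∈ edb, (⟨a.arity, a.rel⟩ : Σ n : ℕ, Set (Fin n → A)) ∈ 𝔸.basic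
  nodup : edb.Nodup
  consistent : ∀ f : Fin r → A,
    (∀ a ∈ idb, a.holds f) → (∀ a ∈ edb, a.holds f) → head.holds f
  mirror : ∀ a ∈ idb, ∀ f : Fin r → A,
    head.holds f → (∀ b ∈ edb, b.holds f) → a.holds f

/-- `Derives 𝔸 r I ρ R`: the `r`-ary maximal symmetric Datalog program
`𝒫_𝔸^r` consistent with `𝔸`, run on the instance `I`, derives `R(ρ)`.
This holds if `(ρ, R)` is a constraint of `I`, or if some rule of `𝒫_𝔸^r`
with head `R(τ)` admits an evaluation `ω` of its variables into `V` with
`ω ∘ τ = ρ`, whose (at most one) IDB body atom is derived and whose non-IDB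
body atoms are constraints of `I` under `ω`. -/
inductive Derives {A V : Type} (𝔸 : RelStruct A) (r : ℕ) (I : Instance A V) :
    ∀ {n : ℕ}, (Fin n → V) → Set (Fin n → A) → Prop
  | base {n : ℕ} (ρ : Fin n → V) (R : Set (Fin n → A)) :
      (⟨n, ρ, R⟩ : Σ n : ℕ, (Fin n → V) × Set (Fin n → A)) ∈ I.constraints →
      Derives 𝔸 r I ρ R
  | step (rule : Rule A 𝔸 r) (ω : Fin r → V) :
      (∀ a ∈ rule.idb, Derives 𝔸 r I (fun i => ω (a.scope i)) a.rel) →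
      (∀ a ∈ rule.edb,
        (⟨a.arity, fun i => ω (a.scope i), a.rel⟩ :
          Σ n : ℕ, (Fin n → V) × Set (Fin n → A)) ∈ I.constraints) →
      Derives 𝔸 r I (fun i => ω (rule.head.scope i)) rule.head.rel

/-- `𝒫_𝔸^r(I) ⊢ G`: the program derives a goal predicate, i.e. an empty
relation of arity at most `r`. -/
def DerivesGoal {A V : Type} (𝔸 : RelStruct A) (r : ℕ) (I : Instance A V) : Prop :=
  ∃ (n : ℕ) (ρ : Fin n → V), n ≤ r ∧ Derives 𝔸 r I ρ (∅ : Set (Fin n → A))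

/-- `𝒫_𝔸^r(I) ⊢ J`: the program run on `I` derives every constraint of `J`. -/
def DerivesInstance {A V : Type} (𝔸 : RelStruct A) (r : ℕ) (I J : Instance A V) : Prop :=
  ∀ c ∈ J.constraints, Derives 𝔸 r I c.2.1 c.2.2

/-- An `m`-ary operation `t` preserves the `n`-ary relation `R`. -/
def PreservesRel {A : Type} {m n : ℕ} (t : (Fin m → A) → A) (R : Set (Fin n → A)) : Prop :=
  ∀ rows : Fin m → Fin n → A, (∀ j, rows j ∈ R) → (fun i => t (fun j => rows j i)) ∈ R

/-- A polymorphism of `𝔸`: an operation preserving all basic relations. -/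
def IsPolymorphism {A : Type} {m : ℕ} (𝔸 : RelStruct A) (t : (Fin m → A) → A) : Prop :=
  ∀ R ∈ 𝔸.basic, PreservesRel t R.2

def ternaryOp {A : Type} (p : A → A → A → A) : (Fin 3 → A) → A :=
  fun v => p (v 0) (v 1) (v 2)

/-- A chain of `n` Hagemann–Mitschke terms: idempotent ternary operations
`p 0, …, p n` with `p 0 x y z = x`, `p k x x y = p (k+1) x y y`, `p n x y z = z`. -/
def IsHMChain {A : Type} (n : ℕ) (p : ℕ → A → A → A → A) : Prop :=
  (∀ k ≤ n, ∀ x : A, p k x x x = x) ∧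
  (∀ x y z : A, p 0 x y z = x) ∧
  (∀ x y z : A, p n x y z = z) ∧
  (∀ k < n, ∀ x y : A, p k x x y = p (k + 1) x y y)

def Pres3Set {A : Type} (p : A → A → A → A) (S : Set A) : Prop :=
  ∀ x y z, x ∈ S → y ∈ S → z ∈ S → p x y z ∈ S

def Pres3Rel {A : Type} (p : A → A → A → A) (E : Set (A × A)) : Prop :=
  ∀ u v w, u ∈ E → v ∈ E → w ∈ E → (p u.1 v.1 w.1, p u.2 v.2 w.2) ∈ E

def PresOpSet {A : Type} {m : ℕ} (t : (Fin m → A) → A) (S : Set A) : Prop :=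
  ∀ x : Fin m → A, (∀ j, x j ∈ S) → t x ∈ S

def PresOpRel {A : Type} {m : ℕ} (t : (Fin m → A) → A) (E : Set (A × A)) : Prop :=
  ∀ x y : Fin m → A, (∀ j, (x j, y j) ∈ E) → (t x, t y) ∈ E

/-- A path instance of length `len`: variables `1, …, len`, one unary
constraint `B i` on each variable `i ∈ [1, len]`, and one binary constraint
`E i` with scope `(i, i+1)` for each `i ∈ [1, len-1]`. -/
structure PathInstance (A : Type) where
  len : ℕ
  B : ℕ → Set A
  E : ℕ → Set (A × A)

/-- A solution of the subinstance of the path instance `I` induced by `[a, b]`. -/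
def IsSolutionOn {A : Type} (I : PathInstance A) (a b : ℕ) (s : ℕ → A) : Prop :=
  (∀ i, a ≤ i → i ≤ b → s i ∈ I.B i) ∧
  (∀ i, a ≤ i → i + 1 ≤ b → (s i, s (i + 1)) ∈ I.E i)

def IsSolution {A : Type} (I : PathInstance A) (s : ℕ → A) : Prop :=
  IsSolutionOn I 1 I.len s

def unaryRel {A : Type} (S : Set A) : Set (Fin 1 → A) := {f | f 0 ∈ S}

def pairRel {A : Type} (E : Set (A × A)) : Set (Fin 2 → A) := {f | (f 0, f 1) ∈ E}

/-- The path instance `I`, presented as a CSP instance on the variable set `ℕ`. -/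
def PathInstance.toInstance {A : Type} (I : PathInstance A) : Instance A ℕ where
  constraints :=
    {c | (∃ i, 1 ≤ i ∧ i ≤ I.len ∧
            c = ⟨1, fun _ => i, unaryRel (I.B i)⟩) ∨
         (∃ i, 1 ≤ i ∧ i + 1 ≤ I.len ∧
            c = ⟨2, ![i, i + 1], pairRel (I.E i)⟩)}

/-- An `n`-braid in the path instance `I`: solutions `s 0, …, s n` and indices
`1 ≤ idx 1 < … < idx n ≤ I.len` with `s k (idx k) = s (k+1) (idx k)` and
`s (k-1) (idx (k+1)) = s k (idx (k+1))` for `k = 1, …, n-1`. -/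
def IsBraid {A : Type} (I : PathInstance A) (n : ℕ) (s : ℕ → ℕ → A) (idx : ℕ → ℕ) : Prop :=
  (∀ k ≤ n, IsSolution I (s k)) ∧
  1 ≤ idx 1 ∧ idx n ≤ I.len ∧
  (∀ k, 1 ≤ k → k < n → idx k < idx (k + 1)) ∧
  (∀ k, 1 ≤ k → k + 1 ≤ n →
    s k (idx k) = s (k + 1) (idx k) ∧ s (k - 1) (idx (k + 1)) = s k (idx (k + 1)))

/-- The binary constraint of `I` with scope `(i, i+1)` is subdirect. -/
def SubdirectAt {A : Type} (I : PathInstance A) (i : ℕ) : Prop :=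
  (I.B i).Nonempty ∧ (I.B (i + 1)).Nonempty ∧
  (∀ a ∈ I.B i, ∃ b ∈ I.B (i + 1), (a, b) ∈ I.E i) ∧
  (∀ b ∈ I.B (i + 1), ∃ a ∈ I.B i, (a, b) ∈ I.E i)

/-- The subinstance of `I` induced by `[a, b]` is subdirect. -/
def SubdirectOn {A : Type} (I : PathInstance A) (a b : ℕ) : Prop :=
  ∀ i, a ≤ i → i + 1 ≤ b → SubdirectAt I i

def Subdirect {A : Type} (I : PathInstance A) : Prop := SubdirectOn I 1 I.len

/-- The sets `C_i`: `C 1 = B 1` and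
`C (i+1) = {b ∈ B (i+1) | ∃ c ∈ C i, (c, b) ∈ E i}`. -/
def reachSet {A : Type} (I : PathInstance A) : ℕ → Set A
  | 0 => ∅
  | 1 => I.B 1
  | (i + 2) => {b ∈ I.B (i + 2) | ∃ c ∈ reachSet I (i + 1), (c, b) ∈ I.E (i + 1)}

/-- `B_{i,i+1}` contains a backward edge: an edge `(b, c) ∈ E i` with
`b ∈ B i \ C i` and `c ∈ C (i+1)`. -/
def BackwardAt {A : Type} (I : PathInstance A) (i : ℕ) : Prop :=
  1 ≤ i ∧ i + 1 ≤ I.len ∧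
  ∃ b c, (b, c) ∈ I.E i ∧ b ∈ I.B i ∧ b ∉ reachSet I i ∧ c ∈ reachSet I (i + 1)

/-- Adjacency in the graph `Conn(I_{[lo,hi]})`: its vertices are pairs `(i, a)`
with `a ∈ B i`, `lo ≤ i ≤ hi`, and `(i, a)` is adjacent to `(i+1, b)` whenever
`(a, b) ∈ E i`. -/
def connAdj {A : Type} (I : PathInstance A) (lo hi : ℕ) (p q : ℕ × A) : Prop :=
  lo ≤ p.1 ∧ p.1 + 1 ≤ hi ∧ q.1 = p.1 + 1 ∧
  p.2 ∈ I.B p.1 ∧ q.2 ∈ I.B q.1 ∧ (p.2, q.2) ∈ I.E p.1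

/-- `λ_{I,lo,hi}`: the pairs `(a, b) ∈ B lo × B hi` joined by an undirected path
in `Conn(I_{[lo,hi]})`. -/
def lamRel {A : Type} (I : PathInstance A) (lo hi : ℕ) : Set (A × A) :=
  {ab | ab.1 ∈ I.B lo ∧ ab.2 ∈ I.B hi ∧
    Relation.ReflTransGen (fun p q => connAdj I lo hi p q ∨ connAdj I lo hi q p)
      (lo, ab.1) (hi, ab.2)}

open Classical in
/-- The variable set `U` of the instance `I_λ`: the variables `1`, `len`, and
`i, i+1` for every index `i` such that `B_{i,i+1}` has a backward edge. -/
noncomputable def lamVars {A : Type} (I : PathInstance A) : Finset ℕ :=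
  (Finset.Icc 1 I.len).filter
    (fun v => v = 1 ∨ v = I.len ∨ BackwardAt I v ∨ (2 ≤ v ∧ BackwardAt I (v - 1)))

/-- The `t`-th smallest element of `U` (`1`-indexed). -/
noncomputable def lamEnum {A : Type} (I : PathInstance A) (t : ℕ) : ℕ :=
  ((lamVars I).sort (· ≤ ·)).getD (t - 1) 0

/-- The instance `I_λ`, presented as a path instance whose `t`-th variable is
the `t`-th smallest element of `U`: it consists of the subinstance of `I`
induced by `U`, where each gap between consecutive elements `u < w` of `U` with
`w > u + 1` is filled by the binary constraint `λ_{I,u,w}`. -/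
noncomputable def lamInst {A : Type} (I : PathInstance A) : PathInstance A where
  len := (lamVars I).card
  B := fun t => I.B (lamEnum I t)
  E := fun t =>
    if lamEnum I (t + 1) = lamEnum I t + 1 then I.E (lamEnum I t)
    else lamRel I (lamEnum I t) (lamEnum I (t + 1))

/-- Unpacking an `m`-tuple of elements of `V^k` into an `m*k`-tuple of
elements of `V`. -/
def unpackTuple {X : Type} {m k : ℕ} (σ : Fin m → Fin k → X) : Fin (m * k) → X :=
  fun t => σ t.divNat t.modNat

/-- Unpacking an `m`-ary relation on `A^k` into an `m*k`-ary relation on `A`. -/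
def unpackRel {A : Type} {m k : ℕ} (U : Set (Fin m → Fin k → A)) :
    Set (Fin (m * k) → A) :=
  {t | ∃ u ∈ U, ∀ i : Fin (m * k), t i = u i.divNat i.modNat}

/-- The instance `I` has pathwidth at most `p`. -/
def PathwidthLE {A V : Type} (I : Instance A V) (p : ℕ) : Prop :=
  ∃ (m : ℕ) (U : Fin m → Set V),
    (∀ v : V, ∃ i, v ∈ U i) ∧
    (∀ i, (U i).Finite ∧ (U i).ncard ≤ p + 1) ∧
    (∀ i j q : Fin m, i ≤ q → q ≤ j → ∀ v, v ∈ U i → v ∈ U j → v ∈ U q) ∧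
    (∀ c ∈ I.constraints, ∃ i, Set.range c.2.1 ⊆ U i)

/-- `𝔸` has pathwidth duality `p`: for every unsatisfiable instance `I` of
`CSP(𝔸)` there is an unsatisfiable instance `J` of `CSP(𝔸)` of pathwidth at
most `p` such that identifying some variables of `J` (along `h`) yields a
subinstance of `I`. -/
def HasPathwidthDuality {A : Type} (𝔸 : RelStruct A) (p : ℕ) : Prop :=
  ∀ (V : Type) (I : Instance A V), IsCSPInstance 𝔸 I → ¬I.Satisfiable →
    ∃ (W : Type) (J : Instance A W) (h : W → V),
      IsCSPInstance 𝔸 J ∧ ¬J.Satisfiable ∧ PathwidthLE J p ∧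
      ∀ c ∈ J.constraints,
        (⟨c.1, fun i => h (c.2.1 i), c.2.2⟩ :
          Σ n : ℕ, (Fin n → V) × Set (Fin n → A)) ∈ I.constraints

/-- The `k`-th bubble power `𝔸^(k)` of `𝔸`: the relational structure on `A^k`
whose basic relations are all unary relations definable as conjunctions of
basic relations of `𝔸` (with identification of variables and dummy variables,
but no existential quantification), and all binary relations
`E_ℐ = {(a, b) | ∀ (i,j) ∈ ℐ, a i = b j}` for `ℐ ⊆ [k]²`. -/
def bubblePower {A : Type} (𝔸 : RelStruct A) (k : ℕ) : RelStruct (Fin k → A) where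
  basic :=
    {r | (∃ L : Set (Σ n : ℕ, (Fin n → Fin k) × Set (Fin n → A)),
            (∀ c ∈ L, (⟨c.1, c.2.2⟩ : Σ n : ℕ, Set (Fin n → A)) ∈ 𝔸.basic) ∧
            r = ⟨1, {f : Fin 1 → (Fin k → A) |
                      ∀ c ∈ L, (fun i => f 0 (c.2.1 i)) ∈ c.2.2}⟩) ∨
         (∃ Idx : Set (Fin k × Fin k),
            r = ⟨2, {f : Fin 2 → (Fin k → A) | ∀ q ∈ Idx, f 0 q.1 = f 1 q.2}⟩)}

/-!
A backward edge with respect to a forward-closed family of sets `C` enters `C` from outside. In a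
subdirect segment each backward edge lies on a solution crossing it; if there are many of them and
the domains are small, Ramsey's theorem extracts a braid from the crossing solutions, and the
Hagemann–Mitschke terms glue this braid into one solution that leaves `C`, which is absurd. So the
number of backward edges is bounded. Propagating `C` along the segment while remembering membership
in `C` at the backward edges is reversible, so symmetric Datalog with boundedly many variables
derives the reachability relation of the segment. Replacing the segments between variables where
arc consistency fails by these relations gives an unsatisfiable path instance with strictly smaller
domains, and induction on `N` applies.
-/

section Homogeneous

variable {α A : Type*} [LinearOrder α]

/-- A function `v` of two arguments is *end-homogeneous* on `T` if `v m a`, for `m < a` in `T`,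
does not depend on `a`. -/
def EndHomogeneousOn (v : α → α → A) (T : Finset α) : Prop :=
  ∀ m ∈ T, ∀ a ∈ T, ∀ b ∈ T, m < a → m < b → v m a = v m b

theorem EndHomogeneousOn.mono {v : α → α → A} {S T : Finset α} (h : EndHomogeneousOn v T)
    (hST : S ⊆ T) : EndHomogeneousOn v S :=
  fun m hm a ha b hb => h m (hST hm) a (hST ha) b (hST hb)

theorem EndHomogeneousOn.insert_of_lt {v : α → α → A} {T : Finset α} {m : α} {y : A}
    (h : EndHomogeneousOn v T) (hm : ∀ a ∈ T, m < a) (hy : ∀ a ∈ T, v m a = y) :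
    EndHomogeneousOn v (insert m T) := by
  have mem_of_gt : ∀ k ∈ insert m T, ∀ a ∈ insert m T, k < a → a ∈ T := by
    rintro k hk a ha hka
    rcases Finset.mem_insert.1 ha with rfl | ha
    · rcases Finset.mem_insert.1 hk with rfl | hk
      · exact absurd hka (lt_irrefl _)
      · exact absurd hka (hm k hk).not_gt
    · exact ha
  intro k hk a ha b hb hka hkb
  have haT := mem_of_gt k hk a ha hka
  have hbT := mem_of_gt k hk b hb hkb
  rcases Finset.mem_insert.1 hk with rfl | hkT
  · rw [hy a haT, hy b hbT]
  · exact h k hkT a haT b hbT hka hkb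

/-- Ramsey-type step: fix the least element, keep a majority colour class, and iterate. -/
theorem exists_endHomogeneousOn_subset (N K : ℕ) :
    ∃ M : ℕ, ∀ {α A : Type*} [LinearOrder α] [DecidableEq A] (v : α → α → A) (S : Finset α),
      (∀ m ∈ S, (S.image (v m)).card ≤ N) → M ≤ S.card →
        ∃ T ⊆ S, T.card = K ∧ EndHomogeneousOn v T := by
  induction K with
  | zero => exact ⟨0, fun v S _ _ => ⟨∅, S.empty_subset, rfl, by simp [EndHomogeneousOn]⟩⟩
  | succ K ih =>
    obtain ⟨M, hM⟩ := ih
    refine ⟨N * M + 2, fun {α A} _ _ v S hN hS => ?_⟩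
    have hne : S.Nonempty := Finset.card_pos.1 (by omega)
    let m := S.min' hne
    have hm : m ∈ S := S.min'_mem hne
    have hlt : (S.image (v m)).card * M < (S.erase m).card := by
      have := Nat.mul_le_mul_right M (hN m hm)
      rw [Finset.card_erase_of_mem hm]
      omega
    obtain ⟨y, -, hy⟩ := Finset.exists_lt_card_fiber_of_mul_lt_card_of_maps_to
      (fun l hl => Finset.mem_image_of_mem (v m) (Finset.mem_of_mem_erase hl)) hlt
    have hsub : (S.erase m).filter (fun l => v m l = y) ⊆ S :=
      (Finset.filter_subset _ _).trans (Finset.erase_subset _ _)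
    obtain ⟨T, hTS, hTK, hT⟩ := hM v _
      (fun k hk => (Finset.card_le_card (Finset.image_subset_image hsub)).trans (hN k (hsub hk)))
      hy.le
    have hmT : ∀ a ∈ T, m < a := fun a ha =>
      S.min'_lt_of_mem_erase_min' hne (Finset.mem_filter.1 (hTS ha)).1
    refine ⟨insert m T, Finset.insert_subset hm (hTS.trans hsub), ?_,
      hT.insert_of_lt hmT fun a ha => (Finset.mem_filter.1 (hTS ha)).2⟩
    rw [Finset.card_insert_of_notMem fun h => lt_irrefl m (hmT m h), hTK]

theorem exists_endHomogeneousOn_and_dual_subset (N K : ℕ) :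
    ∃ M : ℕ, ∀ {α A : Type*} [LinearOrder α] [DecidableEq A] (v : α → α → A) (S : Finset α),
      (∀ m ∈ S, (S.image (v m)).card ≤ N) → M ≤ S.card →
        ∃ T ⊆ S, T.card = K ∧ EndHomogeneousOn v T ∧ EndHomogeneousOn (α := αᵒᵈ) v T := by
  obtain ⟨M₁, h₁⟩ := exists_endHomogeneousOn_subset N K
  obtain ⟨M₂, h₂⟩ := exists_endHomogeneousOn_subset N M₁
  refine ⟨M₂, fun {α A} _ _ v S hN hS => ?_⟩
  obtain ⟨S', hS', hcard, hhom⟩ := h₂ v S hN hS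
  obtain ⟨T, hT, hTK, hdual⟩ := h₁ (α := αᵒᵈ) v S'
    (fun m hm => (Finset.card_le_card (Finset.image_subset_image hS')).trans (hN m (hS' hm)))
    hcard.ge
  exact ⟨T, hT.trans hS', hTK, hhom.mono hT, hdual⟩

end Homogeneous

section Enumeration

variable {D : Finset ℕ} {d s t : ℕ}

/-- The `t`-th smallest element of `D`, where `t` counts from `1` as in `lamEnum`. -/
noncomputable def enum (D : Finset ℕ) (t : ℕ) : ℕ :=
  Nat.nth (· ∈ D) (t - 1)

theorem enum_mem (h1 : 1 ≤ t) (ht : t ≤ D.card) : enum D t ∈ D :=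
  Nat.nth_mem_of_lt_card (p := (· ∈ D)) D.finite_toSet (by
    rw [Finset.finite_toSet_toFinset]; omega)

theorem enum_lt_enum (h1 : 1 ≤ s) (hst : s < t) (ht : t ≤ D.card) : enum D s < enum D t :=
  Nat.nth_lt_nth_of_lt_card (p := (· ∈ D)) D.finite_toSet (by omega) (by
    rw [Finset.finite_toSet_toFinset]; omega)

theorem enum_le_enum (h1 : 1 ≤ s) (hst : s ≤ t) (ht : t ≤ D.card) : enum D s ≤ enum D t := by
  rcases hst.eq_or_lt with rfl | hst
  · rfl
  · exact (enum_lt_enum h1 hst ht).le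

theorem exists_enum_eq (hd : d ∈ D) : ∃ t, 1 ≤ t ∧ t ≤ D.card ∧ enum D t = d := by
  obtain ⟨k, hk, rfl⟩ := Nat.exists_lt_card_finite_nth_eq (p := (· ∈ D)) D.finite_toSet hd
  rw [Finset.finite_toSet_toFinset] at hk
  exact ⟨k + 1, by omega, hk, rfl⟩

theorem enum_one_le (hd : d ∈ D) : enum D 1 ≤ d := by
  obtain ⟨t, h1, ht, rfl⟩ := exists_enum_eq hd
  exact enum_le_enum le_rfl h1 ht

theorem le_enum_card (hd : d ∈ D) : d ≤ enum D D.card := by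
  obtain ⟨t, h1, ht, rfl⟩ := exists_enum_eq hd
  exact enum_le_enum h1 ht le_rfl

theorem notMem_of_enum_lt_of_lt_enum_succ (h1 : 1 ≤ t) (ht : t + 1 ≤ D.card)
    (htd : enum D t < d) (hdt : d < enum D (t + 1)) : d ∉ D := by
  intro hd
  obtain ⟨s, hs1, hsD, rfl⟩ := exists_enum_eq hd
  rcases le_or_gt s t with hst | hts
  · exact htd.not_ge (enum_le_enum hs1 hst (by omega))
  · exact hdt.not_ge (enum_le_enum (by omega) hts hsD)

end Enumeration

section Solutions

variable {A : Type} {I : PathInstance A} {a b c i : ℕ} {s t : ℕ → A}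

theorem IsSolutionOn.mono (hs : IsSolutionOn I a b s) {a' b' : ℕ} (ha : a ≤ a') (hb : b' ≤ b) :
    IsSolutionOn I a' b' s :=
  ⟨fun i h1 h2 => hs.1 i (by omega) (by omega), fun i h1 h2 => hs.2 i (by omega) (by omega)⟩

theorem IsSolutionOn.exists_glue (hs : IsSolutionOn I a b s) (ht : IsSolutionOn I b c t)
    (hst : s b = t b) :
    ∃ r, IsSolutionOn I a c r ∧ (∀ k ≤ b, r k = s k) ∧ ∀ k, b ≤ k → r k = t k := by
  let r : ℕ → A := fun k => if k ≤ b then s k else t k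
  have hleft : ∀ k ≤ b, r k = s k := fun k hk => if_pos hk
  have hright : ∀ k, b ≤ k → r k = t k := by
    intro k hk
    rcases hk.eq_or_lt with rfl | hk
    · rw [hleft b le_rfl, hst]
    · exact if_neg hk.not_ge
  refine ⟨r, ⟨fun i h1 h2 => ?_, fun i h1 h2 => ?_⟩, hleft, hright⟩
  · rcases le_total i b with hi | hi
    · exact hleft i hi ▸ hs.1 i h1 hi
    · exact hright i hi ▸ ht.1 i hi h2
  · rcases Nat.lt_or_ge i b with hi | hi
    · rw [hleft i hi.le, hleft (i + 1) hi]
      exact hs.2 i h1 hi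
    · rw [hright i hi, hright (i + 1) (by omega)]
      exact ht.2 i hi h2

theorem isSolutionOn_self : IsSolutionOn I i i s ↔ s i ∈ I.B i := by
  refine ⟨fun hs => hs.1 i le_rfl le_rfl, fun hi => ⟨fun j h1 h2 => ?_, fun j h1 h2 => ?_⟩⟩
  · rwa [le_antisymm h2 h1]
  · omega

theorem isSolutionOn_succ :
    IsSolutionOn I i (i + 1) s ↔
      s i ∈ I.B i ∧ s (i + 1) ∈ I.B (i + 1) ∧ (s i, s (i + 1)) ∈ I.E i := by
  constructor
  · exact fun hs => ⟨hs.1 i le_rfl (by omega), hs.1 (i + 1) (by omega) le_rfl,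
      hs.2 i le_rfl le_rfl⟩
  · rintro ⟨hx, hy, hxy⟩
    refine ⟨fun j h1 h2 => ?_, fun j h1 h2 => ?_⟩
    · rcases h1.eq_or_lt with rfl | h1
      · exact hx
      · rwa [show j = i + 1 by omega]
    · rwa [show j = i by omega]

theorem exists_isSolutionOn_succ {x y : A} (hx : x ∈ I.B i) (hy : y ∈ I.B (i + 1))
    (hxy : (x, y) ∈ I.E i) : ∃ s, IsSolutionOn I i (i + 1) s ∧ s i = x ∧ s (i + 1) = y := by
  refine ⟨fun k => if k = i then x else y, isSolutionOn_succ.2 ?_, ?_, ?_⟩ <;> simp [hx, hy, hxy]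

/-- Every element of `B i` has an out-edge to `B (i + 1)`. -/
def HasSuccAt (I : PathInstance A) (i : ℕ) : Prop :=
  ∀ x ∈ I.B i, ∃ y ∈ I.B (i + 1), (x, y) ∈ I.E i

/-- Every element of `B (i + 1)` has an in-edge from `B i`. -/
def HasPredAt (I : PathInstance A) (i : ℕ) : Prop :=
  ∀ y ∈ I.B (i + 1), ∃ x ∈ I.B i, (x, y) ∈ I.E i

theorem IsSolutionOn.exists_extend_right (hs : IsSolutionOn I a b s) (hab : a ≤ b) (hbc : b ≤ c)
    (h : ∀ i, b ≤ i → i < c → HasSuccAt I i) :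
    ∃ r, IsSolutionOn I a c r ∧ ∀ k ≤ b, r k = s k := by
  induction c, hbc using Nat.le_induction with
  | base => exact ⟨s, hs, fun _ _ => rfl⟩
  | succ c hbc ih =>
    obtain ⟨r, hr, hrs⟩ := ih fun i h1 h2 => h i h1 (by omega)
    have hrc : r c ∈ I.B c := hr.1 c (by omega) le_rfl
    obtain ⟨y, hy, hxy⟩ := h c hbc (by omega) (r c) hrc
    obtain ⟨t, ht, htc, -⟩ := exists_isSolutionOn_succ hrc hy hxy
    obtain ⟨r', hr', hleft, -⟩ := hr.exists_glue ht htc.symm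
    exact ⟨r', hr', fun k hk => (hleft k (by omega)).trans (hrs k hk)⟩

theorem IsSolutionOn.exists_extend_left (hs : IsSolutionOn I b c s) (hab : a ≤ b) (hbc : b ≤ c)
    (h : ∀ i, a ≤ i → i < b → HasPredAt I i) :
    ∃ r, IsSolutionOn I a c r ∧ ∀ k, b ≤ k → r k = s k := by
  induction b, hab using Nat.le_induction generalizing s with
  | base => exact ⟨s, hs, fun _ _ => rfl⟩
  | succ b hab ih =>
    have hsb : s (b + 1) ∈ I.B (b + 1) := hs.1 (b + 1) le_rfl hbc
    obtain ⟨x, hx, hxy⟩ := h b hab (by omega) (s (b + 1)) hsb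
    obtain ⟨t, ht, -, htb⟩ := exists_isSolutionOn_succ hx hsb hxy
    obtain ⟨r', hr', -, hright⟩ := ht.exists_glue hs htb
    obtain ⟨r, hr, hrr'⟩ := ih hr' (by omega) fun i h1 h2 => h i h1 (by omega)
    exact ⟨r, hr, fun k hk => (hrr' k (by omega)).trans (hright k hk)⟩

end Solutions

section Braids

variable {A : Type} {I : PathInstance A} {u w n : ℕ} {q : A → A → A → A}
  {p : ℕ → A → A → A → A} {s t r : ℕ → A}

/-- The operation `q` preserves all unary and binary constraints of `I` inside `[u, w]`. -/
def PreservesOn (q : A → A → A → A) (I : PathInstance A) (u w : ℕ) : Prop :=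
  (∀ i, u ≤ i → i ≤ w → Pres3Set q (I.B i)) ∧ ∀ i, u ≤ i → i + 1 ≤ w → Pres3Rel q (I.E i)

theorem PreservesOn.mono (h : PreservesOn q I u w) {u' w' : ℕ} (hu : u ≤ u') (hw : w' ≤ w) :
    PreservesOn q I u' w' :=
  ⟨fun i h1 h2 => h.1 i (by omega) (by omega), fun i h1 h2 => h.2 i (by omega) (by omega)⟩

theorem IsSolutionOn.map₃ (h : PreservesOn q I u w) (hs : IsSolutionOn I u w s)
    (ht : IsSolutionOn I u w t) (hr : IsSolutionOn I u w r) :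
    IsSolutionOn I u w (fun i => q (s i) (t i) (r i)) :=
  ⟨fun i h1 h2 => h.1 i h1 h2 _ _ _ (hs.1 i h1 h2) (ht.1 i h1 h2) (hr.1 i h1 h2),
    fun i h1 h2 => h.2 i h1 h2 _ _ _ (hs.2 i h1 h2) (ht.2 i h1 h2) (hr.2 i h1 h2)⟩

/-- `IsBraid` for the subinstance of `I` induced by the interval `[u, w]`. -/
def IsBraidOn (I : PathInstance A) (u w n : ℕ) (s : ℕ → ℕ → A) (idx : ℕ → ℕ) : Prop :=
  (∀ k ≤ n, IsSolutionOn I u w (s k)) ∧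
  u ≤ idx 1 ∧ idx n ≤ w ∧
  (∀ k, 1 ≤ k → k < n → idx k < idx (k + 1)) ∧
  ∀ k, 1 ≤ k → k + 1 ≤ n →
    s k (idx k) = s (k + 1) (idx k) ∧ s (k - 1) (idx (k + 1)) = s k (idx (k + 1))

theorem IsBraidOn.exists_isSolutionOn {s : ℕ → ℕ → A} {idx : ℕ → ℕ} (hp : IsHMChain n p)
    (hpres : ∀ k ≤ n, PreservesOn (p k) I u w) (hb : IsBraidOn I u w n s idx) (hn : 1 ≤ n) :
    ∃ t, IsSolutionOn I u w t ∧ t (idx 1) = s 0 (idx 1) ∧ t (idx n) = s n (idx n) := by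
  obtain ⟨-, hp0, hpn, hpk⟩ := hp
  obtain ⟨hs, hu, hw, hidx, hmeet⟩ := hb
  have idx_mono : ∀ j k, 1 ≤ j → j ≤ k → k ≤ n → idx j ≤ idx k := by
    intro j k hj hjk
    induction k, hjk using Nat.le_induction with
    | base => exact fun _ => le_rfl
    | succ k hjk ih => exact fun hkn => (ih (by omega)).trans (hidx k (by omega) hkn).le
  -- At `idx k` the solution switches from `p (k-1) (s (k-2)) (s (k-1)) (s k)` to
  -- `p k (s (k-1)) (s k) (s (k+1))`.
  have switch : ∀ k, k < n → ∃ t, IsSolutionOn I u w t ∧ t (idx 1) = s 0 (idx 1) ∧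
      t (idx (k + 1)) = p k (s k (idx (k + 1))) (s k (idx (k + 1))) (s (k + 1) (idx (k + 1))) := by
    intro k
    induction k with
    | zero => exact fun _ => ⟨s 0, hs 0 (by omega), rfl, (hp0 _ _ _).symm⟩
    | succ k ih =>
      intro hk
      obtain ⟨t, ht, ht1, htk⟩ := ih (by omega)
      obtain ⟨hfix, hfix'⟩ := hmeet (k + 1) (by omega) hk
      have hnext := IsSolutionOn.map₃ (hpres (k + 1) hk.le) (hs k (by omega)) (hs (k + 1) hk.le)
        (hs (k + 2) hk)
      obtain ⟨t', ht', hleft, hright⟩ := (ht.mono le_rfl (b' := idx (k + 1))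
          ((idx_mono _ n (by omega) hk.le le_rfl).trans hw)).exists_glue
        (hnext.mono (hu.trans (idx_mono 1 _ le_rfl (by omega) hk.le)) le_rfl)
        (by rw [htk, hpk k (by omega), ← hfix])
      refine ⟨t', ht', (hleft _ (idx_mono 1 _ le_rfl (by omega) hk.le)).trans ht1, ?_⟩
      rw [hright _ (hidx (k + 1) (by omega) hk).le]
      simpa using congrArg (fun x => p (k + 1) x _ _) hfix'
  obtain ⟨k, rfl⟩ := Nat.exists_eq_add_of_le' hn
  obtain ⟨t, ht, ht1, htn⟩ := switch k (by omega)
  exact ⟨t, ht, ht1, by rw [htn, hpk k (by omega), hpn]⟩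

end Braids

section BackwardEdges

variable {A : Type} {I : PathInstance A} {C : ℕ → Set A} {u w i l m n : ℕ}
  {p : ℕ → A → A → A → A} {s : ℕ → A}

/-- Inside `[u, w]`, edges of `I` that start in `C` also end in `C`. -/
def ForwardClosedOn (I : PathInstance A) (u w : ℕ) (C : ℕ → Set A) : Prop :=
  ∀ i, u ≤ i → i + 1 ≤ w → ∀ x ∈ C i, ∀ y ∈ I.B (i + 1), (x, y) ∈ I.E i → y ∈ C (i + 1)

/-- The instance induced by `[u, w]` is subdirect except that elements of `B u` need no successor
and elements of `B w` no predecessor. -/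
def InteriorSubdirectOn (I : PathInstance A) (u w : ℕ) : Prop :=
  (∀ i, u < i → i < w → HasSuccAt I i) ∧ ∀ i, u ≤ i → i + 1 < w → HasPredAt I i

open Classical in
/-- The positions in `[u, w]` of the backward edges of `I` with respect to `C`, i.e. of those that
enter `C` from outside. -/
noncomputable def backwardEdges (I : PathInstance A) (C : ℕ → Set A) (u w : ℕ) : Finset ℕ :=
  (Finset.Ico u w).filter fun i =>
    ∃ x ∈ I.B i, x ∉ C i ∧ ∃ y ∈ I.B (i + 1), y ∈ C (i + 1) ∧ (x, y) ∈ I.E i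

theorem mem_backwardEdges : i ∈ backwardEdges I C u w ↔ u ≤ i ∧ i < w ∧
    ∃ x ∈ I.B i, x ∉ C i ∧ ∃ y ∈ I.B (i + 1), y ∈ C (i + 1) ∧ (x, y) ∈ I.E i := by
  classical rw [backwardEdges, Finset.mem_filter, Finset.mem_Ico, and_assoc]

/-- The solution `s` on `[u, w]` uses a backward edge at `l`. -/
def CrossesAt (I : PathInstance A) (C : ℕ → Set A) (u w l : ℕ) (s : ℕ → A) : Prop :=
  u ≤ l ∧ l + 1 ≤ w ∧ IsSolutionOn I u w s ∧ s l ∉ C l ∧ s (l + 1) ∈ C (l + 1)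

theorem ForwardClosedOn.mem_of_le (hC : ForwardClosedOn I u w C) (hs : IsSolutionOn I u w s)
    (hul : u ≤ l) (hlm : l ≤ m) (hmw : m ≤ w) (hl : s l ∈ C l) : s m ∈ C m := by
  induction m, hlm using Nat.le_induction with
  | base => exact hl
  | succ m hlm ih =>
    exact hC m (by omega) hmw _ (ih (by omega)) _ (hs.1 _ (by omega) hmw) (hs.2 m (by omega) hmw)

theorem CrossesAt.mem_of_lt (h : CrossesAt I C u w l s) (hC : ForwardClosedOn I u w C)
    (hlm : l < m) (hmw : m ≤ w) : s m ∈ C m :=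
  hC.mem_of_le h.2.2.1 (h.1.trans (Nat.le_succ l)) hlm hmw h.2.2.2.2

theorem CrossesAt.notMem_of_le (h : CrossesAt I C u w l s) (hC : ForwardClosedOn I u w C)
    (hum : u ≤ m) (hml : m ≤ l) : s m ∉ C m :=
  fun hm => h.2.2.2.1 (hC.mem_of_le h.2.2.1 hum hml ((Nat.le_succ l).trans h.2.1) hm)

theorem exists_crossesAt (hI : InteriorSubdirectOn I u w) (hi : i ∈ backwardEdges I C u w) :
    ∃ s, CrossesAt I C u w i s := by
  obtain ⟨hui, hiw, x, hx, hxC, y, hy, hyC, hxy⟩ := mem_backwardEdges.1 hi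
  obtain ⟨r, hr, rfl, rfl⟩ := exists_isSolutionOn_succ hx hy hxy
  obtain ⟨r₁, hr₁, heq₁⟩ := hr.exists_extend_right (Nat.le_succ i) hiw
    fun j h1 h2 => hI.1 j (by omega) h2
  obtain ⟨r₂, hr₂, heq₂⟩ := hr₁.exists_extend_left hui hiw.le fun j h1 h2 => hI.2 j h1 (by omega)
  refine ⟨r₂, hui, hiw, hr₂, ?_, ?_⟩
  · rwa [heq₂ i le_rfl, heq₁ i (Nat.le_succ i)]
  · rwa [heq₂ (i + 1) (Nat.le_succ i), heq₁ (i + 1) le_rfl]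

/-- A large homogeneous family of crossing solutions contains a braid whose composite solution
starts inside `C` and ends outside, against forward closure. -/
theorem card_lt_of_endHomogeneousOn_crossesAt (hp : IsHMChain n p)
    (hpres : ∀ k ≤ n, PreservesOn (p k) I u w) (hC : ForwardClosedOn I u w C)
    {e : ℕ → ℕ → A} {T : Finset ℕ} (he : ∀ l ∈ T, CrossesAt I C u w l (e l))
    (hT : EndHomogeneousOn (fun m l => e l m) T)
    (hT' : EndHomogeneousOn (α := ℕᵒᵈ) (fun m l => e l m) T) : T.card < 2 * n + 2 := by
  by_contra! hcard
  let h : ℕ → ℕ := fun j => enum T (j + 1)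
  have hmem : ∀ j ≤ 2 * n + 1, h j ∈ T := fun j hj => enum_mem (by omega) (by omega)
  have hlt : ∀ {i j}, i < j → j ≤ 2 * n + 1 → h i < h j := fun hij hj =>
    enum_lt_enum (by omega) (by omega) (by omega)
  have hcross : ∀ j ≤ 2 * n + 1, CrossesAt I C u w (h j) (e (h j)) := fun j hj => he _ (hmem j hj)
  have hu : ∀ j ≤ 2 * n + 1, u ≤ h j := fun j hj => (hcross j hj).1
  have hw : ∀ j ≤ 2 * n + 1, h j ≤ w := fun j hj => (Nat.le_succ _).trans (hcross j hj).2.1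
  obtain rfl | hn := Nat.eq_zero_or_pos n
  · have hsub : ∀ x y : A, x = y := fun x y => (hp.2.1 x x y).symm.trans (hp.2.2.1 x x y)
    have hmem₁ := (hcross 0 (by omega)).mem_of_lt hC (hlt one_pos le_rfl) (hw 1 le_rfl)
    rw [hsub (e (h 0) (h 1)) (e (h 1) (h 1))] at hmem₁
    exact (hcross 1 le_rfl).2.2.2.1 hmem₁
  have hbraid : IsBraidOn I u w n (fun k => e (h (2 * k))) fun k => h (2 * k - 1) := by
    refine ⟨fun k hk => (hcross _ (by omega)).2.2.1, hu _ (by omega), hw _ (by omega),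
      fun k hk hkn => hlt (by omega) (by omega), fun k hk hkn => ⟨?_, ?_⟩⟩
    · exact hT _ (hmem _ (by omega)) _ (hmem _ (by omega)) _ (hmem _ (by omega))
        (hlt (by omega) (by omega)) (hlt (by omega) (by omega))
    · exact hT' _ (hmem _ (by omega)) _ (hmem _ (by omega)) _ (hmem _ (by omega))
        (hlt (i := 2 * (k - 1)) (by omega) (by omega)) (hlt (i := 2 * k) (by omega) (by omega))
  obtain ⟨t, ht, htfirst, htlast⟩ := hbraid.exists_isSolutionOn hp hpres hn
  have hfirst : t (h 1) ∈ C (h 1) := by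
    rw [show h 1 = h (2 * 1 - 1) from rfl, htfirst]
    exact (hcross 0 (by omega)).mem_of_lt hC (hlt one_pos (by omega)) (hw _ (by omega))
  have hlast : t (h (2 * n - 1)) ∉ C (h (2 * n - 1)) := by
    rw [htlast]
    exact (hcross (2 * n) (by omega)).notMem_of_le hC (hu _ (by omega))
      (hlt (by omega) (by omega)).le
  have hle : h 1 ≤ h (2 * n - 1) := enum_le_enum (by omega) (by omega) (by omega)
  exact hlast (hC.mem_of_le ht (hu 1 (by omega)) hle (hw _ (by omega)) hfirst)

theorem exists_card_backwardEdges_le (N n : ℕ) :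
    ∃ M : ℕ, ∀ {A : Type} {I : PathInstance A} {p : ℕ → A → A → A → A} {C : ℕ → Set A} {u w : ℕ},
      IsHMChain n p → (∀ k ≤ n, PreservesOn (p k) I u w) → ForwardClosedOn I u w C →
      InteriorSubdirectOn I u w → (∀ i, u ≤ i → i ≤ w → (I.B i).encard ≤ N) →
        (backwardEdges I C u w).card ≤ M := by
  classical
  obtain ⟨M, hM⟩ := exists_endHomogeneousOn_and_dual_subset N (2 * n + 2)
  refine ⟨M, fun {A I p C u w} hp hpres hC hI hN => ?_⟩
  by_contra! hcard
  have : Nonempty (ℕ → A) := by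
    obtain ⟨i, hi⟩ := Finset.card_pos.1 (Nat.zero_lt_of_lt hcard)
    exact (exists_crossesAt hI hi).nonempty
  choose! e he using fun l (hl : l ∈ backwardEdges I C u w) => exists_crossesAt hI hl
  have hrow : ∀ m ∈ backwardEdges I C u w,
      ((backwardEdges I C u w).image fun l => e l m).card ≤ N := by
    intro m hm
    have hsub : (((backwardEdges I C u w).image fun l => e l m : Finset A) : Set A) ⊆ I.B m := by
      simp only [Finset.coe_image, Set.image_subset_iff]
      exact fun l hl => (he l hl).2.2.1.1 m (he m hm).1 ((Nat.le_succ m).trans (he m hm).2.1)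
    have := (Set.encard_le_encard hsub).trans
      (hN m (he m hm).1 ((Nat.le_succ m).trans (he m hm).2.1))
    rwa [Set.encard_coe_eq_coe_finsetCard, Nat.cast_le] at this
  obtain ⟨T, hTS, hTcard, hT, hT'⟩ := hM (fun m l => e l m) _ hrow hcard.le
  exact (card_lt_of_endHomogeneousOn_crossesAt hp hpres hC (fun l hl => he l (hTS hl)) hT hT').ne
    hTcard

end BackwardEdges

section Interderivability

variable {A V V' : Type} {I : Instance A V} {P Q R : Set (V → A)} {W X : Finset V} {r k : ℕ}

/-- Membership of an assignment in `P` only depends on its values on `W`. -/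
def SupportedOn (P : Set (V → A)) (W : Finset V) : Prop :=
  DependsOn (· ∈ P) (W : Set V)

theorem SupportedOn.mem_iff (hP : SupportedOn P W) {f g : V → A} (h : ∀ v ∈ W, f v = g v) :
    f ∈ P ↔ g ∈ P :=
  (hP h).to_iff

theorem SupportedOn.mono (hP : SupportedOn P W) (hWX : W ⊆ X) : SupportedOn P X :=
  DependsOn.mono (Finset.coe_subset.2 hWX) hP

theorem SupportedOn.compl (hP : SupportedOn P W) : SupportedOn Pᶜ W :=
  fun _ _ h => congrArg Not (hP h)

theorem SupportedOn.inter (hP : SupportedOn P W) (hQ : SupportedOn Q W) :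
    SupportedOn (P ∩ Q) W :=
  fun _ _ h => congrArg₂ And (hP h) (hQ h)

theorem SupportedOn.biInter {ι : Type*} {S : Set ι} {P : ι → Set (V → A)}
    (h : ∀ i ∈ S, SupportedOn (P i) W) : SupportedOn (⋂ i ∈ S, P i) W := by
  intro f g hfg
  simp only [Set.mem_iInter]
  exact propext (forall₂_congr fun i hi => (h i hi).mem_iff hfg)

theorem supportedOn_univ : SupportedOn (Set.univ : Set (V → A)) W :=
  fun _ _ _ => rfl

theorem supportedOn_scope {n : ℕ} {σ : Fin n → V} (hσ : ∀ i, σ i ∈ W) (S : Set (Fin n → A)) :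
    SupportedOn {f | (fun i => f (σ i)) ∈ S} W :=
  fun _ _ h => congrArg (· ∈ S) (funext fun i => h (σ i) (hσ i))

theorem supportedOn_var {v : V} (hv : v ∈ W) (S : Set A) : SupportedOn {f | f v ∈ S} W :=
  fun _ _ h => congrArg (· ∈ S) (h v hv)

theorem supportedOn_pair {v w : V} (hv : v ∈ W) (hw : w ∈ W) (S : Set (A × A)) :
    SupportedOn {f | (f v, f w) ∈ S} W :=
  fun _ _ h => congrArg (· ∈ S) (congrArg₂ Prod.mk (h v hv) (h w hw))

theorem SupportedOn.comap [DecidableEq V] {P : Set (V' → A)} {W : Finset V'}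
    (hP : SupportedOn P W) (σ : V' → V) : SupportedOn ((· ∘ σ) ⁻¹' P) (W.image σ) :=
  fun _ _ h => hP fun v hv => h (σ v) (Finset.mem_image_of_mem σ hv)

/-- `f` satisfies all constraints of `I` whose scope lies inside the window `W`. -/
def Instance.SolOn (I : Instance A V) (W : Finset V) (f : V → A) : Prop :=
  ∀ c ∈ I.constraints, (∀ i, c.2.1 i ∈ W) → (fun i => f (c.2.1 i)) ∈ c.2.2

theorem Instance.SolOn.mono {f : V → A} (h : I.SolOn X f) (hWX : W ⊆ X) : I.SolOn W f :=
  fun c hc hW => h c hc fun i => hWX (hW i)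

/-- A symmetric Datalog step with at most `r` variables, in semantic form: the predicates `P` and
`Q` live on a common window of size at most `r` and are equivalent modulo the constraints of `I`
inside that window. -/
def LocallyEquiv (I : Instance A V) (r : ℕ) (P Q : Set (V → A)) : Prop :=
  ∃ W : Finset V, W.card ≤ r ∧ SupportedOn P W ∧ SupportedOn Q W ∧
    ∀ f, I.SolOn W f → (f ∈ P ↔ f ∈ Q)

/-- `P` and `Q` are connected by symmetric Datalog steps with at most `r` variables. -/
def Interderivable (I : Instance A V) (r : ℕ) : Set (V → A) → Set (V → A) → Prop :=
  Relation.ReflTransGen (LocallyEquiv I r)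

theorem Interderivable.refl (P : Set (V → A)) : Interderivable I r P P :=
  Relation.ReflTransGen.refl

theorem LocallyEquiv.interderivable (h : LocallyEquiv I r P Q) : Interderivable I r P Q :=
  Relation.ReflTransGen.single h

theorem LocallyEquiv.symm (h : LocallyEquiv I r P Q) : LocallyEquiv I r Q P :=
  let ⟨W, hW, hP, hQ, hPQ⟩ := h
  ⟨W, hW, hQ, hP, fun f hf => (hPQ f hf).symm⟩

theorem LocallyEquiv.compl (h : LocallyEquiv I r P Q) : LocallyEquiv I r Pᶜ Qᶜ :=
  let ⟨W, hW, hP, hQ, hPQ⟩ := h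
  ⟨W, hW, hP.compl, hQ.compl, fun f hf => not_congr (hPQ f hf)⟩

theorem LocallyEquiv.inter_left (h : LocallyEquiv I r P Q) (hR : SupportedOn R X)
    (hX : X.card ≤ k) : LocallyEquiv I (r + k) (R ∩ P) (R ∩ Q) := by
  classical
  obtain ⟨W, hW, hP, hQ, hPQ⟩ := h
  have hWX : W ⊆ W ∪ X := Finset.subset_union_left
  have hR' := hR.mono (Finset.subset_union_right (s₁ := W))
  exact ⟨W ∪ X, (Finset.card_union_le W X).trans (add_le_add hW hX), hR'.inter (hP.mono hWX),
    hR'.inter (hQ.mono hWX), fun f hf => and_congr_right fun _ => hPQ f (hf.mono hWX)⟩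

theorem Interderivable.symm (h : Interderivable I r P Q) : Interderivable I r Q P :=
  have : Std.Symm (LocallyEquiv I r) := ⟨fun _ _ => LocallyEquiv.symm⟩
  Relation.ReflTransGen.stdSymm.symm _ _ h

theorem Interderivable.trans (h : Interderivable I r P Q) (h' : Interderivable I r Q R) :
    Interderivable I r P R :=
  Relation.ReflTransGen.trans h h'

theorem Interderivable.mono (h : Interderivable I r P Q) (hr : r ≤ k) : Interderivable I k P Q :=
  Relation.ReflTransGen.mono (fun _ _ ⟨W, hW, h⟩ => ⟨W, hW.trans hr, h⟩) _ _ h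

theorem Interderivable.compl (h : Interderivable I r P Q) : Interderivable I r Pᶜ Qᶜ :=
  Relation.ReflTransGen.lift (·ᶜ) (fun _ _ => LocallyEquiv.compl) _ _ h

theorem Interderivable.inter_left (h : Interderivable I r P Q) (hR : SupportedOn R X)
    (hX : X.card ≤ k) : Interderivable I (r + k) (R ∩ P) (R ∩ Q) :=
  Relation.ReflTransGen.lift (R ∩ ·) (fun _ _ h => h.inter_left hR hX) _ _ h

theorem Interderivable.inter_biInter {ι : Type*} {S : Set ι} {P : ι → Set (V → A)}
    (hS : S.Finite) (h : ∀ i ∈ S, Interderivable I r Set.univ (P i))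
    (hP : ∀ i ∈ S, SupportedOn (P i) X) (hR : SupportedOn R X) (hX : X.card ≤ k) :
    Interderivable I (r + k) R (R ∩ ⋂ i ∈ S, P i) := by
  induction S, hS using Set.Finite.induction_on with
  | empty => simpa using Interderivable.refl R
  | @insert j S _ _ ih =>
    have hS' := ih (fun i hi => h i (Set.mem_insert_of_mem j hi))
      fun i hi => hP i (Set.mem_insert_of_mem j hi)
    have hsupp := hR.inter (SupportedOn.biInter fun i hi => hP i (Set.mem_insert_of_mem j hi))
    have hj := (h j (Set.mem_insert j S)).inter_left hsupp hX
    rw [Set.inter_univ] at hj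
    rw [Set.biInter_insert, Set.inter_comm (P j), ← Set.inter_assoc]
    exact hS'.trans hj

/-- A step that uses constraints of `J` is simulated by first adding all constraints of `J` inside
its window, which are derivable from `I`, and removing them afterwards. -/
theorem Interderivable.comap {J : Instance A V'} (hJ : J.constraints.Finite) (σ : V' → V) {s : ℕ}
    (h : ∀ c ∈ J.constraints,
      Interderivable I r Set.univ {f | (fun i => f (σ (c.2.1 i))) ∈ c.2.2})
    {P Q : Set (V' → A)} (hPQ : Interderivable J s P Q) :
    Interderivable I (r + s) ((· ∘ σ) ⁻¹' P) ((· ∘ σ) ⁻¹' Q) := by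
  classical
  refine Relation.ReflTransGen.lift' (fun P => (· ∘ σ) ⁻¹' P) ?_ _ _ hPQ
  rintro P Q ⟨W, hW, hP, hQ, hPQ⟩
  let S : Set _ := {c ∈ J.constraints | ∀ i, c.2.1 i ∈ W}
  let L : Set (V → A) := ⋂ c ∈ S, {f | (fun i => f (σ (c.2.1 i))) ∈ c.2.2}
  have addConstraints : ∀ {P : Set (V' → A)}, SupportedOn P W →
      Interderivable I (r + s) ((· ∘ σ) ⁻¹' P) ((· ∘ σ) ⁻¹' P ∩ L) := fun hP =>
    Interderivable.inter_biInter (hJ.subset fun c hc => hc.1) (fun c hc => h c hc.1)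
      (fun c hc => supportedOn_scope (fun i => Finset.mem_image_of_mem σ (hc.2 i)) c.2.2)
      (hP.comap σ) (Finset.card_image_le.trans hW)
  have hL : (· ∘ σ) ⁻¹' P ∩ L = (· ∘ σ) ⁻¹' Q ∩ L := by
    ext f
    refine and_congr_left fun hf => hPQ (f ∘ σ) fun c hc hcW => ?_
    exact Set.mem_iInter₂.1 hf c ⟨hc, hcW⟩
  exact (addConstraints hP).trans (hL ▸ (addConstraints hQ).symm)

end Interderivability

section PathDerivations

variable {A : Type} {I : PathInstance A} {C : ℕ → Set A} {U W : Finset ℕ} {u w i M : ℕ}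
  {f : ℕ → A}

theorem PathInstance.unary_mem_constraints (h1 : 1 ≤ i) (h2 : i ≤ I.len) :
    ⟨1, fun _ => i, unaryRel (I.B i)⟩ ∈ I.toInstance.constraints :=
  Or.inl ⟨i, h1, h2, rfl⟩

theorem PathInstance.binary_mem_constraints (h1 : 1 ≤ i) (h2 : i + 1 ≤ I.len) :
    ⟨2, ![i, i + 1], pairRel (I.E i)⟩ ∈ I.toInstance.constraints :=
  Or.inr ⟨i, h1, h2, rfl⟩

theorem PathInstance.constraints_finite (I : PathInstance A) :
    I.toInstance.constraints.Finite := by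
  refine (((Set.finite_Icc 1 I.len).image
    fun i => (⟨1, fun _ => i, unaryRel (I.B i)⟩ : Σ n : ℕ, (Fin n → ℕ) × Set (Fin n → A))).union
    ((Set.finite_Icc 1 I.len).image fun i => ⟨2, ![i, i + 1], pairRel (I.E i)⟩)).subset ?_
  rintro _ (⟨i, h1, h2, rfl⟩ | ⟨i, h1, h2, rfl⟩)
  · exact Or.inl ⟨i, ⟨h1, h2⟩, rfl⟩
  · exact Or.inr ⟨i, ⟨h1, by omega⟩, rfl⟩

theorem Instance.SolOn.mem_B (h : I.toInstance.SolOn W f) (hi : i ∈ W) (h1 : 1 ≤ i)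
    (h2 : i ≤ I.len) : f i ∈ I.B i :=
  h _ (I.unary_mem_constraints h1 h2) fun _ => hi

theorem Instance.SolOn.mem_E (h : I.toInstance.SolOn W f) (hi : i ∈ W) (hi' : i + 1 ∈ W)
    (h1 : 1 ≤ i) (h2 : i + 1 ≤ I.len) : (f i, f (i + 1)) ∈ I.E i :=
  h _ (I.binary_mem_constraints h1 h2) (Fin.forall_fin_two.2 ⟨hi, hi'⟩)

theorem Instance.SolOn.isSolutionOn (h : I.toInstance.SolOn (Finset.Icc u w) f) (hu : 1 ≤ u)
    (hw : w ≤ I.len) : IsSolutionOn I u w f :=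
  ⟨fun _ h1 h2 => h.mem_B (Finset.mem_Icc.2 ⟨h1, h2⟩) (by omega) (by omega),
    fun _ h1 h2 => h.mem_E (Finset.mem_Icc.2 ⟨h1, by omega⟩)
      (Finset.mem_Icc.2 ⟨by omega, h2⟩) (by omega) (by omega)⟩

/-- The assignments that lie in `C` at `i` and at all positions of `U` up to `i`. -/
def insideUpTo (U : Finset ℕ) (C : ℕ → Set A) (i : ℕ) : Set (ℕ → A) :=
  {f | f i ∈ C i ∧ ∀ v ∈ U, v ≤ i → f v ∈ C v}

theorem supportedOn_insideUpTo (hU : U ⊆ W) (hi : i ∈ W) : SupportedOn (insideUpTo U C i) W := by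
  intro f g h
  refine congrArg₂ And (congrArg (· ∈ C i) (h i hi)) (propext ?_)
  exact forall₃_congr fun v hv _ => by rw [h v (hU hv)]

/-- Remembering `f i ∈ C i` at the backward edges is what makes the propagation of `C` from `i` to
`i + 1` reversible. -/
theorem ForwardClosedOn.locallyEquiv_insideUpTo (hC : ForwardClosedOn I u w C) (hu : 1 ≤ u)
    (hw : w ≤ I.len) (hui : u ≤ i) (hiw : i < w) :
    LocallyEquiv I.toInstance ((backwardEdges I C u w).card + 2)
      (insideUpTo (backwardEdges I C u w) C i) (insideUpTo (backwardEdges I C u w) C (i + 1)) := by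
  set U := backwardEdges I C u w
  have hi : i ∈ insert i (insert (i + 1) U) := by simp
  have hi' : i + 1 ∈ insert i (insert (i + 1) U) := by simp
  have hUW : U ⊆ insert i (insert (i + 1) U) :=
    (Finset.subset_insert _ _).trans (Finset.subset_insert _ _)
  refine ⟨insert i (insert (i + 1) U), (Finset.card_insert_le _ _).trans
      (Nat.succ_le_succ (Finset.card_insert_le _ _)),
    supportedOn_insideUpTo hUW hi, supportedOn_insideUpTo hUW hi', fun f hf => ?_⟩
  have hBi := hf.mem_B hi (by omega) (by omega)
  have hBi' := hf.mem_B hi' (by omega) (by omega)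
  have hE := hf.mem_E hi hi' (by omega) (by omega)
  constructor
  · rintro ⟨hfi, hfU⟩
    have hfi' := hC i hui hiw _ hfi _ hBi' hE
    refine ⟨hfi', fun v hv hvi => ?_⟩
    rcases hvi.eq_or_lt with rfl | hvi
    exacts [hfi', hfU v hv (by omega)]
  · rintro ⟨hfi', hfU⟩
    refine ⟨?_, fun v hv hvi => hfU v hv (by omega)⟩
    by_contra hfi
    exact hfi (hfU i (mem_backwardEdges.2 ⟨hui, hiw, _, hBi, hfi, _, hBi', hfi', hE⟩) (by omega))

theorem ForwardClosedOn.interderivable_univ (hC : ForwardClosedOn I u w C) (hu : 1 ≤ u)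
    (huw : u ≤ w) (hw : w ≤ I.len) :
    Interderivable I.toInstance ((backwardEdges I C u w).card + 3) Set.univ
      {f | f u ∈ C u → f w ∈ C w} := by
  have propagate : ∀ i, u ≤ i → i ≤ w →
      Interderivable I.toInstance ((backwardEdges I C u w).card + 2)
        (insideUpTo (backwardEdges I C u w) C u) (insideUpTo (backwardEdges I C u w) C i) := by
    intro i hui
    induction i, hui using Nat.le_induction with
    | base => exact fun _ => Interderivable.refl _
    | succ i hui ih =>
      exact fun hiw => (ih (by omega)).trans
        (hC.locallyEquiv_insideUpTo hu hw hui hiw).interderivable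
  have refute := (propagate w huw le_rfl).inter_left
    (supportedOn_var (Finset.mem_singleton_self w) (C w)).compl (Finset.card_singleton w).le
  convert refute.compl.symm using 1
  · exact (Set.eq_univ_of_forall fun f hf => hf.1 hf.2.1).symm
  · ext f
    have hu' : f ∈ insideUpTo (backwardEdges I C u w) C u ↔ f u ∈ C u := by
      refine and_iff_left_of_imp fun hf v hv hvu => ?_
      rwa [le_antisymm hvu (mem_backwardEdges.1 hv).1]
    simp only [Set.mem_ofPred_eq, Set.mem_compl_iff, Set.mem_inter_iff, hu']
    tauto

/-- The pairs of endpoint values of solutions on `[u, w]`. -/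
def reachRel (I : PathInstance A) (u w : ℕ) : Set (A × A) :=
  {xy | ∃ s, IsSolutionOn I u w s ∧ (s u, s w) = xy}

theorem IsSolutionOn.mem_reachRel {s : ℕ → A} (hs : IsSolutionOn I u w s) :
    (s u, s w) ∈ reachRel I u w :=
  ⟨s, hs, rfl⟩

theorem mem_reachRel_self {x y : A} : (x, y) ∈ reachRel I u u ↔ x ∈ I.B u ∧ x = y := by
  constructor
  · rintro ⟨s, hs, hxy⟩
    obtain ⟨rfl, rfl⟩ := Prod.mk.inj hxy
    exact ⟨isSolutionOn_self.1 hs, rfl⟩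
  · rintro ⟨hx, rfl⟩
    exact (isSolutionOn_self (s := fun _ => x).2 hx).mem_reachRel

theorem forwardClosedOn_reachRel (I : PathInstance A) (u w : ℕ) (x : A) :
    ForwardClosedOn I u w fun j => {y | (x, y) ∈ reachRel I u j} := by
  rintro i hui - y ⟨s, hs, hsy⟩ z hz hyz
  obtain ⟨rfl, rfl⟩ := Prod.mk.inj hsy
  obtain ⟨t, ht, hti, rfl⟩ := exists_isSolutionOn_succ (hs.1 i hui le_rfl) hz hyz
  obtain ⟨r, hr, hleft, hright⟩ := hs.exists_glue ht hti.symm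
  rw [← hleft u hui, ← hright (i + 1) (Nat.le_succ i)]
  exact hr.mem_reachRel

theorem interderivable_univ_reachRel (hu : 1 ≤ u) (huw : u ≤ w) (hw : w ≤ I.len)
    (hfin : (I.B u).Finite)
    (hM : ∀ C, ForwardClosedOn I u w C → (backwardEdges I C u w).card ≤ M) :
    Interderivable I.toInstance (M + 5) Set.univ {f | (f u, f w) ∈ reachRel I u w} := by
  let C : A → ℕ → Set A := fun x j => {y | (x, y) ∈ reachRel I u j}
  have hstart : LocallyEquiv I.toInstance 1 Set.univ {f | f u ∈ I.B u} :=
    ⟨{u}, (Finset.card_singleton u).le, supportedOn_univ,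
      supportedOn_var (Finset.mem_singleton_self u) _, fun f hf =>
      iff_of_true trivial (hf.mem_B (Finset.mem_singleton_self u) hu (huw.trans hw))⟩
  have hderiv : ∀ x ∈ I.B u, Interderivable I.toInstance (M + 3) Set.univ
      {f | f u ∈ C x u → f w ∈ C x w} := fun x _ =>
    ((forwardClosedOn_reachRel I u w x).interderivable_univ hu huw hw).mono
      (Nat.add_le_add_right (hM _ (forwardClosedOn_reachRel I u w x)) 3)
  have hmemu : u ∈ ({u, w} : Finset ℕ) := Finset.mem_insert_self u {w}
  have hmemw : w ∈ ({u, w} : Finset ℕ) := Finset.mem_insert_of_mem (Finset.mem_singleton_self w)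
  have hinter := Interderivable.inter_biInter hfin hderiv
    (fun x _ => supportedOn_pair hmemu hmemw {q | q.1 ∈ C x u → q.2 ∈ C x w})
    (supportedOn_var hmemu (I.B u)) Finset.card_le_two
  have hset : {f : ℕ → A | (f u, f w) ∈ reachRel I u w} =
      {f | f u ∈ I.B u} ∩ ⋂ x ∈ I.B u, {f | f u ∈ C x u → f w ∈ C x w} := by
    ext f
    simp only [C, Set.mem_inter_iff, Set.mem_ofPred_eq, Set.mem_iInter, mem_reachRel_self]
    constructor
    · intro hf
      obtain ⟨s, hs, hsf⟩ := id hf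
      obtain ⟨hsu, -⟩ := Prod.mk.inj hsf
      exact ⟨hsu ▸ hs.1 u le_rfl huw, fun x _ hx => hx.2 ▸ hf⟩
    · exact fun ⟨hfu, hf⟩ => hf (f u) hfu ⟨hfu, rfl⟩
  exact hset ▸ (hstart.interderivable.mono (by omega)).trans hinter

/-- The values at `i` of the solutions on the neighbourhood `[i - 1, i + 1]` of `i` in `I`. -/
def arcSet (I : PathInstance A) (i : ℕ) : Set A :=
  {x | ∃ s, IsSolutionOn I (max 1 (i - 1)) (min I.len (i + 1)) s ∧ s i = x}

theorem locallyEquiv_univ_arcSet (h1 : 1 ≤ i) (h2 : i ≤ I.len) :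
    LocallyEquiv I.toInstance 3 Set.univ {f | f i ∈ arcSet I i} := by
  refine ⟨Finset.Icc (max 1 (i - 1)) (min I.len (i + 1)), ?_, supportedOn_univ,
    supportedOn_var ?_ _, fun f hf => iff_of_true trivial ⟨f, hf.isSolutionOn ?_ ?_, rfl⟩⟩
  · rw [Nat.card_Icc]
    omega
  · rw [Finset.mem_Icc]
    omega
  · exact le_max_left _ _
  · exact min_le_left _ _

end PathDerivations

section Reduction

variable {A : Type} {I : PathInstance A} {i t N M : ℕ} {x : A} {q : A → A → A → A}
  {s : ℕ → A}

open Classical in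
/-- The variables of `I` at which arc consistency fails. -/
noncomputable def defects (I : PathInstance A) : Finset ℕ :=
  (Finset.Icc 1 I.len).filter fun i => ¬I.B i ⊆ arcSet I i

theorem mem_defects : i ∈ defects I ↔ (1 ≤ i ∧ i ≤ I.len) ∧ ¬I.B i ⊆ arcSet I i := by
  classical rw [defects, Finset.mem_filter, Finset.mem_Icc]

theorem subset_arcSet_of_notMem_defects (h : i ∉ defects I) (h1 : 1 ≤ i) (h2 : i ≤ I.len) :
    I.B i ⊆ arcSet I i := by
  by_contra hi
  exact h (mem_defects.2 ⟨⟨h1, h2⟩, hi⟩)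

theorem hasSuccAt_of_notMem_defects (h : i ∉ defects I) (h1 : 1 ≤ i) (h2 : i < I.len) :
    HasSuccAt I i := by
  intro x hx
  obtain ⟨s, hs, rfl⟩ := subset_arcSet_of_notMem_defects h h1 h2.le hx
  exact ⟨s (i + 1), hs.1 _ (by omega) (by omega), hs.2 _ (by omega) (by omega)⟩

theorem hasPredAt_of_notMem_defects (h : i + 1 ∉ defects I) (h1 : 1 ≤ i) (h2 : i < I.len) :
    HasPredAt I i := by
  intro y hy
  obtain ⟨s, hs, rfl⟩ := subset_arcSet_of_notMem_defects h (by omega) h2 hy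
  exact ⟨s i, hs.1 _ (by omega) (by omega), hs.2 _ (by omega) (by omega)⟩

theorem arcSet_subset (h1 : 1 ≤ i) (h2 : i ≤ I.len) : arcSet I i ⊆ I.B i := by
  rintro _ ⟨s, hs, rfl⟩
  exact hs.1 i (by omega) (by omega)

theorem encard_arcSet_le_of_mem_defects (hi : i ∈ defects I) (hN : (I.B i).encard ≤ ↑(N + 1)) :
    (arcSet I i).encard ≤ N := by
  obtain ⟨⟨h1, h2⟩, hsub⟩ := mem_defects.1 hi
  have hfin : (arcSet I i).Finite :=
    (Set.finite_of_encard_le_coe hN).subset (arcSet_subset h1 h2)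
  exact Order.le_of_lt_add_one
    ((hfin.encard_lt_encard ⟨arcSet_subset h1 h2, hsub⟩).trans_le (by exact_mod_cast hN))

theorem exists_isSolutionOn_one_of_mem_arcSet (hx : x ∈ arcSet I i) (h1 : 1 ≤ i) (h2 : i ≤ I.len)
    (h : ∀ j < i, j ∉ defects I) : ∃ s, IsSolutionOn I 1 i s ∧ s i = x := by
  obtain ⟨s, hs, rfl⟩ := hx
  obtain ⟨r, hr, hrs⟩ := (hs.mono le_rfl (b' := i) (by omega)).exists_extend_left
    (le_max_left 1 (i - 1)) (by omega)
    fun j hj hji => hasPredAt_of_notMem_defects (h _ (by omega)) hj (by omega)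
  exact ⟨r, hr, hrs i (by omega)⟩

theorem exists_isSolutionOn_len_of_mem_arcSet (hx : x ∈ arcSet I i) (h1 : 1 ≤ i) (h2 : i ≤ I.len)
    (h : ∀ j, i < j → j ∉ defects I) : ∃ s, IsSolutionOn I i I.len s ∧ s i = x := by
  obtain ⟨s, hs, rfl⟩ := hx
  obtain ⟨r, hr, hrs⟩ := (hs.mono (a' := i) (by omega) le_rfl).exists_extend_right
    (by omega) (min_le_left I.len (i + 1))
    fun j hj hjl => hasSuccAt_of_notMem_defects (h j (by omega)) (by omega) hjl
  exact ⟨r, hr, hrs i (by omega)⟩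

/-- The path instance on the defects of `I`, with arc consistent unary constraints and with
solvability of the intermediate segments as binary constraints. -/
noncomputable def reduction (I : PathInstance A) : PathInstance A where
  len := (defects I).card
  B t := arcSet I (enum (defects I) t)
  E t := reachRel I (enum (defects I) t) (enum (defects I) (t + 1))

theorem enum_defects_bounds (h1 : 1 ≤ t) (ht : t ≤ (defects I).card) :
    1 ≤ enum (defects I) t ∧ enum (defects I) t ≤ I.len :=
  (mem_defects.1 (enum_mem h1 ht)).1

theorem interiorSubdirectOn_enum_defects (h1 : 1 ≤ t) (ht : t + 1 ≤ (defects I).card) :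
    InteriorSubdirectOn I (enum (defects I) t) (enum (defects I) (t + 1)) := by
  have hlo := (enum_defects_bounds h1 (Nat.le_of_succ_le ht)).1
  have hhi := (enum_defects_bounds (t := t + 1) (by omega) ht).2
  constructor
  · exact fun i hi hi' => hasSuccAt_of_notMem_defects
      (notMem_of_enum_lt_of_lt_enum_succ h1 ht hi hi') (by omega) (by omega)
  · exact fun i hi hi' => hasPredAt_of_notMem_defects
      (notMem_of_enum_lt_of_lt_enum_succ h1 ht (Nat.lt_succ_of_le hi) hi') (by omega) (by omega)

theorem IsSolution.exists_of_reduction (hs : IsSolution (reduction I) s)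
    (hne : (defects I).Nonempty) : ∃ f, IsSolution I f := by
  have hcard : 1 ≤ (defects I).card := hne.card_pos
  have prefixSol : ∀ t, 1 ≤ t → t ≤ (defects I).card →
      ∃ r, IsSolutionOn I 1 (enum (defects I) t) r ∧ r (enum (defects I) t) = s t := by
    intro t h1
    induction t, h1 using Nat.le_induction with
    | base =>
      intro _
      obtain ⟨hlo, hhi⟩ := enum_defects_bounds (I := I) le_rfl hcard
      exact exists_isSolutionOn_one_of_mem_arcSet (hs.1 1 le_rfl hcard) hlo hhi
        fun j hj hjD => hj.not_ge (enum_one_le hjD)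
    | succ t h1 ih =>
      intro ht
      obtain ⟨r, hr, hrt⟩ := ih (by omega)
      obtain ⟨r', hr', heq⟩ := hs.2 t h1 ht
      obtain ⟨hstart, hend⟩ := Prod.mk.inj heq
      obtain ⟨f, hf, -, hright⟩ := hr.exists_glue hr' (hrt.trans hstart.symm)
      exact ⟨f, hf, (hright _ (enum_le_enum h1 (Nat.le_succ t) ht)).trans hend⟩
  obtain ⟨r, hr, hrt⟩ := prefixSol _ hcard le_rfl
  obtain ⟨hlo, hhi⟩ := enum_defects_bounds (I := I) hcard le_rfl
  obtain ⟨r', hr', hr't⟩ := exists_isSolutionOn_len_of_mem_arcSet (hs.1 _ hcard le_rfl) hlo hhi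
    fun j hj hjD => hj.not_ge (le_enum_card hjD)
  obtain ⟨f, hf, -⟩ := hr.exists_glue hr' (hrt.trans hr't.symm)
  exact ⟨f, hf⟩

theorem PreservesOn.pres3Set_arcSet (h : PreservesOn q I 1 I.len) : Pres3Set q (arcSet I i) := by
  rintro _ _ _ ⟨s, hs, rfl⟩ ⟨t, ht, rfl⟩ ⟨r, hr, rfl⟩
  exact ⟨_, IsSolutionOn.map₃ (h.mono (le_max_left _ _) (min_le_left _ _)) hs ht hr, rfl⟩

theorem PreservesOn.pres3Rel_reachRel {u w : ℕ} (h : PreservesOn q I u w) :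
    Pres3Rel q (reachRel I u w) := by
  rintro _ _ _ ⟨s, hs, rfl⟩ ⟨t, ht, rfl⟩ ⟨r, hr, rfl⟩
  exact (IsSolutionOn.map₃ h hs ht hr).mem_reachRel

theorem PreservesOn.reduction (h : PreservesOn q I 1 I.len) :
    PreservesOn q (reduction I) 1 (reduction I).len :=
  ⟨fun _ _ _ => h.pres3Set_arcSet, fun _ h1 ht => (h.mono
    (enum_defects_bounds h1 (Nat.le_of_succ_le ht)).1
    (enum_defects_bounds (Nat.le_succ_of_le h1) ht).2).pres3Rel_reachRel⟩

theorem interderivable_univ_of_mem_constraints_reduction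
    (hfin : ∀ i, 1 ≤ i → i ≤ I.len → (I.B i).Finite)
    (hM : ∀ C u w, 1 ≤ u → w ≤ I.len → ForwardClosedOn I u w C → InteriorSubdirectOn I u w →
      (backwardEdges I C u w).card ≤ M) :
    ∀ c ∈ (reduction I).toInstance.constraints, Interderivable I.toInstance (M + 5) Set.univ
      {f | (fun i => f (enum (defects I) (c.2.1 i))) ∈ c.2.2} := by
  rintro _ (⟨t, h1, ht, rfl⟩ | ⟨t, h1, ht, rfl⟩)
  · obtain ⟨hlo, hhi⟩ := enum_defects_bounds h1 ht
    exact (locallyEquiv_univ_arcSet hlo hhi).interderivable.mono (by omega)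
  · obtain ⟨hlo, hlo'⟩ := enum_defects_bounds h1 (Nat.le_of_succ_le ht)
    obtain ⟨-, hhi⟩ := enum_defects_bounds (Nat.le_succ_of_le h1) ht
    exact interderivable_univ_reachRel hlo (enum_le_enum h1 (Nat.le_succ t) ht) hhi
      (hfin _ hlo hlo') fun C hC =>
        hM C _ _ hlo hhi hC (interiorSubdirectOn_enum_defects h1 ht)

theorem locallyEquiv_univ_empty (hno : ¬∃ f, IsSolution I f) (h : 1 ≤ I.len → I.B 1 = ∅) :
    LocallyEquiv I.toInstance 1 Set.univ ∅ := by
  refine ⟨{1}, (Finset.card_singleton 1).le, supportedOn_univ, fun _ _ _ => rfl, fun f hf => ?_⟩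
  rcases Nat.eq_zero_or_pos I.len with hlen | hlen
  · exact absurd ⟨f, fun i _ _ => by omega, fun i _ _ => by omega⟩ hno
  · exact absurd (hf.mem_B (Finset.mem_singleton_self 1) le_rfl hlen) (by simp [h hlen])

theorem exists_interderivable_univ_empty (N n : ℕ) :
    ∃ F : ℕ, ∀ {A : Type} {I : PathInstance A} {p : ℕ → A → A → A → A}, IsHMChain n p →
      (∀ k ≤ n, PreservesOn (p k) I 1 I.len) → (¬∃ f, IsSolution I f) →
      (∀ i, 1 ≤ i → i ≤ I.len → (I.B i).encard ≤ N) →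
        Interderivable I.toInstance F Set.univ ∅ := by
  induction N with
  | zero =>
    refine ⟨1, fun {A I p} _ _ hno hN =>
      (locallyEquiv_univ_empty hno fun hlen => ?_).interderivable⟩
    simpa using hN 1 le_rfl hlen
  | succ N ih =>
    obtain ⟨F, hF⟩ := ih
    obtain ⟨M, hM⟩ := exists_card_backwardEdges_le (N + 1) n
    refine ⟨M + 5 + F, fun {A I p} hp hpres hno hN => ?_⟩
    rcases (defects I).eq_empty_or_nonempty with hD | hD
    · refine (locallyEquiv_univ_empty hno fun hlen => ?_).interderivable.mono (by omega)
      have hnot : ∀ j, j ∉ defects I := by simp [hD]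
      refine Set.eq_empty_of_forall_notMem fun x hx => hno ?_
      obtain ⟨f, hf, -⟩ := exists_isSolutionOn_len_of_mem_arcSet
        (subset_arcSet_of_notMem_defects (hnot 1) le_rfl hlen hx) le_rfl hlen fun j _ => hnot j
      exact ⟨f, hf⟩
    · have hred : Interderivable (reduction I).toInstance F Set.univ ∅ :=
        hF hp (fun k hk => (hpres k hk).reduction) (fun ⟨s, hs⟩ => hno (hs.exists_of_reduction hD))
          fun t h1 ht => encard_arcSet_le_of_mem_defects (enum_mem h1 ht)
            (hN _ (enum_defects_bounds h1 ht).1 (enum_defects_bounds h1 ht).2)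
      refine hred.comap (reduction I).constraints_finite (enum (defects I))
        (interderivable_univ_of_mem_constraints_reduction
          (fun i h1 h2 => Set.finite_of_encard_le_coe (hN i h1 h2)) ?_)
      exact fun C u w hu hw hC hI => hM hp (fun k hk => (hpres k hk).mono hu hw) hC hI
        fun i hui hiw => hN i (hu.trans hui) (hiw.trans hw)

end Reduction

section Simulation

variable {A V : Type} {𝔸 : RelStruct A} {I : Instance A V} {P Q : Set (V → A)}
  {W W' : Finset V} {r R : ℕ} {pos : V → Fin R} {ω : Fin R → V}

/-- An enumeration of the window `W`, used as the scope of the IDB atoms living on `W`. -/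
noncomputable def windowScope (W : Finset V) : Fin W.card → V :=
  fun j => W.equivFin.symm j

theorem windowScope_mem (W : Finset V) (j : Fin W.card) : windowScope W j ∈ W :=
  (W.equivFin.symm j).2

/-- The relation of arity `#W` that the predicate `P` induces on the window `W`. -/
def windowRel (W : Finset V) (P : Set (V → A)) : Set (Fin W.card → A) :=
  (fun f j => f (windowScope W j)) '' P

theorem SupportedOn.mem_windowRel (hP : SupportedOn P W) (f : V → A) :
    (fun j => f (windowScope W j)) ∈ windowRel W P ↔ f ∈ P := by
  refine ⟨?_, Set.mem_image_of_mem _⟩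
  rintro ⟨g, hg, hgf⟩
  refine (hP.mem_iff fun v hv => ?_).1 hg
  simpa [windowScope] using congrFun hgf (W.equivFin ⟨v, hv⟩)

/-- The IDB atom for the predicate `P` on the window `W`, where the variable `v` of the instance is
represented by the variable `pos v` of the rule. -/
noncomputable def windowAtom (pos : V → Fin R) (W : Finset V) (P : Set (V → A)) : Atom A R :=
  ⟨W.card, fun j => pos (windowScope W j), windowRel W P⟩

theorem SupportedOn.holds_windowAtom (hP : SupportedOn P W) (pos : V → Fin R) (f : Fin R → A) :
    (windowAtom pos W P).holds f ↔ f ∘ pos ∈ P :=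
  hP.mem_windowRel (f ∘ pos)

theorem comp_windowScope (h : Set.LeftInvOn ω pos W) :
    (fun j => ω (pos (windowScope W j))) = windowScope W :=
  funext fun j => h (windowScope_mem W j)

/-- The EDB atom for a constraint, with the variables of the instance renamed along `pos`. -/
def constraintAtom (pos : V → Fin R) (c : Σ n : ℕ, (Fin n → V) × Set (Fin n → A)) : Atom A R :=
  ⟨c.1, fun i => pos (c.2.1 i), c.2.2⟩

/-- The EDB atoms for the constraints of `I` whose scope lies inside the window `W`. -/
noncomputable def windowBody (hfin : I.constraints.Finite) (pos : V → Fin R) (W : Finset V) :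
    List (Atom A R) :=
  ((hfin.sep fun c => ∀ i, c.2.1 i ∈ W).image (constraintAtom pos)).toFinset.toList

theorem mem_windowBody {hfin : I.constraints.Finite} {a : Atom A R} :
    a ∈ windowBody hfin pos W ↔
      ∃ c ∈ I.constraints, (∀ i, c.2.1 i ∈ W) ∧ constraintAtom pos c = a := by
  simp [windowBody, and_assoc]

theorem solOn_of_forall_windowBody {hfin : I.constraints.Finite} {f : Fin R → A}
    (hf : ∀ a ∈ windowBody hfin pos W, a.holds f) : I.SolOn W (f ∘ pos) :=
  fun c hc hW => hf (constraintAtom pos c) (mem_windowBody.2 ⟨c, hc, hW, rfl⟩)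

/-- The Datalog rule deriving `Q` on `W'` from `P` on `W` and the constraints of `I` inside `W'`. -/
noncomputable def windowRule (hI : IsCSPInstance 𝔸 I) (hfin : I.constraints.Finite)
    (harity : ∀ c ∈ I.constraints, c.1 ≤ R) (pos : V → Fin R) (hP : SupportedOn P W)
    (hQ : SupportedOn Q W') (hW : W.card ≤ R) (hW' : W'.card ≤ R)
    (hPQ : ∀ f, I.SolOn W' f → (f ∈ P ↔ f ∈ Q)) : Rule A 𝔸 R where
  head := windowAtom pos W' Q
  idb := some (windowAtom pos W P)
  edb := windowBody hfin pos W'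
  head_arity := hW'
  idb_arity := by
    rintro _ ⟨⟩
    exact hW
  edb_arity a ha := by
    obtain ⟨c, hc, -, rfl⟩ := mem_windowBody.1 ha
    exact harity c hc
  edb_basic a ha := by
    obtain ⟨c, hc, -, rfl⟩ := mem_windowBody.1 ha
    exact hI c hc
  nodup := Finset.nodup_toList _
  consistent f hbody hedb := (hQ.holds_windowAtom pos f).2
    ((hPQ _ (solOn_of_forall_windowBody hedb)).1 ((hP.holds_windowAtom pos f).1 (hbody _ rfl)))
  mirror := by
    rintro _ ⟨⟩ f hhead hedb
    exact (hP.holds_windowAtom pos f).2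
      ((hPQ _ (solOn_of_forall_windowBody hedb)).2 ((hQ.holds_windowAtom pos f).1 hhead))

theorem Derives.windowRel_congr (hd : Derives 𝔸 R I (windowScope W) (windowRel W P))
    (hI : IsCSPInstance 𝔸 I) (hfin : I.constraints.Finite)
    (harity : ∀ c ∈ I.constraints, c.1 ≤ R) (hω : Set.LeftInvOn ω pos W)
    (hω' : Set.LeftInvOn ω pos W') (hP : SupportedOn P W) (hQ : SupportedOn Q W')
    (hW : W.card ≤ R) (hW' : W'.card ≤ R) (hPQ : ∀ f, I.SolOn W' f → (f ∈ P ↔ f ∈ Q)) :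
    Derives 𝔸 R I (windowScope W') (windowRel W' Q) := by
  rw [← comp_windowScope hω']
  refine Derives.step (windowRule hI hfin harity pos hP hQ hW hW' hPQ) ω ?_ ?_
  · rintro _ ⟨⟩
    rw [← comp_windowScope hω] at hd
    exact hd
  · intro a ha
    obtain ⟨⟨k, σ, S⟩, hc, hcW, rfl⟩ := (mem_windowBody (hfin := hfin)).1 ha
    have hσ : (fun i => ω (pos (σ i))) = σ := funext fun i => hω' (hcW i)
    change (⟨k, fun i => ω (pos (σ i)), S⟩ : Σ n : ℕ, (Fin n → V) × Set (Fin n → A)) ∈ _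
    rwa [hσ]

theorem derives_windowRel_empty_univ [Nonempty V] [NeZero R] :
    Derives 𝔸 R I (windowScope ∅) (windowRel ∅ Set.univ) := by
  obtain ⟨v⟩ := ‹Nonempty V›
  let rule : Rule A 𝔸 R :=
    { head := windowAtom (fun _ => 0) (∅ : Finset V) Set.univ
      idb := none
      edb := []
      head_arity := Nat.zero_le R
      idb_arity := by simp
      edb_arity := by simp
      edb_basic := by simp
      nodup := List.nodup_nil
      consistent := fun f _ _ => (supportedOn_univ.holds_windowAtom _ f).2 trivial
      mirror := by simp }
  rw [← comp_windowScope (ω := fun _ => v) (pos := fun _ => (0 : Fin R))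
    (by simp [Set.LeftInvOn])]
  exact Derives.step rule (fun _ => v) (by simp [rule]) (by simp [rule])

theorem exists_leftInvOn_of_card_le [Nonempty V] [NeZero R] {Z : Finset V} (hZ : Z.card ≤ R) :
    ∃ (pos : V → Fin R) (ω : Fin R → V), Set.LeftInvOn ω pos Z := by
  obtain ⟨pos, -, hpos⟩ := Z.finite_toSet.exists_injOn_of_encard_le (t := (Set.univ : Set (Fin R)))
    (by simpa using hZ)
  exact ⟨pos, Function.invFunOn pos Z, hpos.leftInvOn_invFunOn⟩

/-- A rule mentions the windows before and after a step, hence `2 * r` variables. -/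
theorem Interderivable.exists_derives [Nonempty V] [NeZero R] (hI : IsCSPInstance 𝔸 I)
    (hfin : I.constraints.Finite) (harity : ∀ c ∈ I.constraints, c.1 ≤ R) (hr : 2 * r ≤ R)
    (h : Interderivable I r Set.univ Q) :
    ∃ W : Finset V, W.card ≤ r ∧ SupportedOn Q W ∧
      Derives 𝔸 R I (windowScope W) (windowRel W Q) := by
  classical
  induction h with
  | refl => exact ⟨∅, Nat.zero_le r, supportedOn_univ, derives_windowRel_empty_univ⟩
  | tail _ hstep ih =>
    obtain ⟨W, hW, hP, hd⟩ := ih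
    obtain ⟨W', hW', -, hQ, hPQ⟩ := hstep
    obtain ⟨pos, ω, hω⟩ := exists_leftInvOn_of_card_le (R := R) (Z := W ∪ W')
      ((Finset.card_union_le W W').trans (by omega))
    refine ⟨W', hW', hQ, hd.windowRel_congr hI hfin harity (hω.mono ?_) (hω.mono ?_) hP hQ
      (by omega) (by omega) hPQ⟩
    · exact Finset.coe_subset.2 Finset.subset_union_left
    · exact Finset.coe_subset.2 Finset.subset_union_right

theorem Interderivable.derivesGoal [Nonempty V] [NeZero R] (hI : IsCSPInstance 𝔸 I)
    (hfin : I.constraints.Finite) (harity : ∀ c ∈ I.constraints, c.1 ≤ R) (hr : 2 * r ≤ R)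
    (h : Interderivable I r Set.univ ∅) : DerivesGoal 𝔸 R I := by
  obtain ⟨W, hW, -, hd⟩ := h.exists_derives hI hfin harity hr
  rw [windowRel, Set.image_empty] at hd
  exact ⟨W.card, windowScope W, by omega, hd⟩

end Simulation

section Polymorphisms

variable {A : Type} {𝔸 : RelStruct A} {I : PathInstance A} {q : A → A → A → A}

theorem PathInstance.arity_le_two {c : Σ n : ℕ, (Fin n → ℕ) × Set (Fin n → A)}
    (hc : c ∈ I.toInstance.constraints) : c.1 ≤ 2 := by
  rcases hc with ⟨i, -, -, rfl⟩ | ⟨i, -, -, rfl⟩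
  exacts [one_le_two, le_rfl]

theorem IsPolymorphism.preservesOn (hq : IsPolymorphism 𝔸 (ternaryOp q))
    (hI : IsCSPInstance 𝔸 I.toInstance) : PreservesOn q I 1 I.len := by
  constructor
  · intro i h1 h2 x y z hx hy hz
    exact hq _ (hI _ (I.unary_mem_constraints h1 h2)) ![fun _ => x, fun _ => y, fun _ => z]
      (by intro j; fin_cases j <;> assumption)
  · intro i h1 h2 x y z hx hy hz
    exact hq _ (hI _ (I.binary_mem_constraints h1 h2)) ![![x.1, x.2], ![y.1, y.2], ![z.1, z.2]]
      (by intro j; fin_cases j <;> assumption)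

end Polymorphisms

theorem statement14_general (N n : ℕ) :
    ∃ F : ℕ, ∀ (A : Type) (𝔸 : RelStruct A),
      (∃ p : ℕ → A → A → A → A, IsHMChain n p ∧ ∀ k ≤ n, IsPolymorphism 𝔸 (ternaryOp (p k))) →
      ∀ I : PathInstance A, IsCSPInstance 𝔸 I.toInstance →
        (¬∃ f : ℕ → A, IsSolution I f) →
        (∀ i, 1 ≤ i → i ≤ I.len → (I.B i).encard ≤ N) →
        DerivesGoal 𝔸 F I.toInstance := by
  obtain ⟨F, hF⟩ := exists_interderivable_univ_empty N n
  refine ⟨2 * F + 2, fun A 𝔸 ⟨p, hp, hpoly⟩ I hI hno hN => ?_⟩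
  have hderiv : Interderivable I.toInstance F Set.univ ∅ :=
    hF hp (fun k hk => (hpoly k hk).preservesOn hI) hno hN
  exact hderiv.derivesGoal hI I.constraints_finite
    (fun c hc => (PathInstance.arity_le_two hc).trans (by omega)) (by omega)

/-- symmetric Datalog works on `n`-permutable path
instances. For each `N` and `n` there exists `f(n, N) ∈ ℕ` such that whenever
`𝔸` is a relational structure admitting a chain of `n` Hagemann–Mitschke terms
as polymorphisms and `I` is an unsatisfiable path instance of `CSP(𝔸)` with
`|B_i| ≤ N` for all `i`, then `𝒫_𝔸^{f(n,N)}(I) ⊢ G`. -/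
theorem statement14 (N n : ℕ) :
    ∃ F : ℕ, ∀ (A : Type), Finite A → ∀ 𝔸 : RelStruct A, 𝔸.basic.Finite →
      (∃ p : ℕ → A → A → A → A, IsHMChain n p ∧
        ∀ k ≤ n, IsPolymorphism 𝔸 (ternaryOp (p k))) →
      ∀ I : PathInstance A, IsCSPInstance 𝔸 I.toInstance →
        (¬∃ f : ℕ → A, IsSolution I f) →
        (∀ i, 1 ≤ i → i ≤ I.len → (I.B i).ncard ≤ N) →
        DerivesGoal 𝔸 F I.toInstance := by
  obtain ⟨F, hF⟩ := statement14_general N n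
  exact ⟨F, fun A _ 𝔸 _ hp I hI hno hN => hF A 𝔸 hp I hI hno fun i h1 h2 =>
    (Set.toFinite (I.B i)).cast_ncard_eq ▸ Nat.cast_le.2 (hN i h1 h2)⟩

end CSPPaper
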